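/- The number of n-element members of the dual complex Δ̄ equals C(2n, n) minus the number of satisfying truth assignments of the CNF formula φ. -/

import Mathlib

/-- For a clause `C` (a finite set of literals `(j,b)`), the circuit
`C' = {(j, ¬b) : (j,b) ∈ C}`. -/
def clauseDual {n : ℕ} (C : Finset (Fin n × Bool)) : Finset (Fin n × Bool) :=
  C.image (fun l => (l.1, !l.2))

/-- The circuit `P i = {t_i, f_i}`. -/
def pairCircuit {n : ℕ} (i : Fin n) : Finset (Fin n × Bool) :=
  {(i, true), (i, false)}

/-- `S` is a face of the complex `Δ` associated with the CNF formula `φ`: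
it contains none of the circuits `C₁', …, C_m', P₁, …, P_n`. -/
def IsFace {n m : ℕ} (φ : Fin m → Finset (Fin n × Bool)) (S : Finset (Fin n × Bool)) : Prop :=
  (∀ k, ¬ clauseDual (φ k) ⊆ S) ∧ (∀ i, ¬ pairCircuit i ⊆ S)

/-- The set `S_a = {(i, a i) : i}` associated with a truth assignment `a`. -/
def assignFace {n : ℕ} (a : Fin n → Bool) : Finset (Fin n × Bool) :=
  Finset.univ.image (fun i => (i, a i))

/-- The assignment `a` satisfies the clause `C`. -/
def SatisfiesClause {n : ℕ} (a : Fin n → Bool) (C : Finset (Fin n × Bool)) : Prop :=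
  ∃ l ∈ C, a l.1 = l.2

/-- The assignment `a` satisfies every clause of the CNF formula `φ`. -/
def Satisfies {n m : ℕ} (φ : Fin m → Finset (Fin n × Bool)) (a : Fin n → Bool) : Prop :=
  ∀ k, SatisfiesClause a (φ k)
/-- `S` belongs to the dual complex `Δ̄` associated with `φ`:
`S` is contained in the complement of some circuit. -/
def InDualCNF {n m : ℕ} (φ : Fin m → Finset (Fin n × Bool))
    (S : Finset (Fin n × Bool)) : Prop :=
  (∃ k, S ⊆ (clauseDual (φ k))ᶜ) ∨ (∃ i, S ⊆ (pairCircuit i)ᶜ)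

/-!
The dual complex consists of the complements of the nonfaces of `Δ`, and complementation preserves
the `n`-element subsets of the `2n` literals, so it suffices to count the `n`-element faces of `Δ`.
A face contains no pair `P i`, so it lies in the graph of an assignment, and if it has `n` elements
it is that whole graph. The graph of `a` contains `C'` exactly when `a` falsifies every literal of
`C`; hence the `n`-element faces are the graphs of the satisfying assignments.
-/

section Duality

variable {α : Type*} [Fintype α] [DecidableEq α]

lemma natCard_not_compl_add_natCard (p : Finset α → Prop) {k l : ℕ}
    (hkl : k + l = Fintype.card α) :
    Nat.card {S : Finset α // ¬ p Sᶜ ∧ S.card = k} + Nat.card {S : Finset α // p S ∧ S.card = l} =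
      (Fintype.card α).choose k := by
  have card_compl_eq_iff (S : Finset α) : Sᶜ.card = l ↔ S.card = k := by
    have := S.card_add_card_compl
    omega
  have card_eq_card_compl : Nat.card {S : Finset α // p S ∧ S.card = l} =
      Nat.card {S : Finset α // p Sᶜ ∧ S.card = k} :=
    (Nat.card_congr <| compl_involutive.toPerm.subtypeEquiv fun S ↦ by
      simp [card_compl_eq_iff]).symm
  classical
  rw [card_eq_card_compl, add_comm, ← Finset.card_univ, ← Finset.card_powersetCard,
    ← Finset.card_filter_add_card_filter_not (fun S ↦ p Sᶜ),
    Nat.subtype_card ((Finset.univ.powersetCard k).filter fun S ↦ p Sᶜ) (by simp [and_comm]),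
    Nat.subtype_card ((Finset.univ.powersetCard k).filter fun S ↦ ¬ p Sᶜ) (by simp [and_comm])]

end Duality

section CNF

variable {n m : ℕ}

lemma mem_assignFace {a : Fin n → Bool} {l : Fin n × Bool} :
    l ∈ assignFace a ↔ a l.1 = l.2 := by
  simp [assignFace, Prod.ext_iff]

lemma assignFace_injective :
    Function.Injective (assignFace : (Fin n → Bool) → Finset (Fin n × Bool)) := by
  intro a b h
  funext i
  have hi : (i, b i) ∈ assignFace a := h ▸ mem_assignFace.2 rfl
  exact mem_assignFace.1 hi

lemma card_assignFace (a : Fin n → Bool) : (assignFace a).card = n := by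
  rw [assignFace, Finset.card_image_of_injective _ fun _ _ h ↦ congrArg Prod.fst h,
    Finset.card_univ, Fintype.card_fin]

lemma clauseDual_subset_assignFace_iff {C : Finset (Fin n × Bool)} {a : Fin n → Bool} :
    clauseDual C ⊆ assignFace a ↔ ¬ SatisfiesClause a C := by
  simp only [clauseDual, Finset.image_subset_iff, mem_assignFace, SatisfiesClause, not_exists,
    not_and, Bool.eq_not]

lemma pairCircuit_subset_iff {i : Fin n} {S : Finset (Fin n × Bool)} :
    pairCircuit i ⊆ S ↔ ∀ b, (i, b) ∈ S := by
  simp only [pairCircuit, Finset.insert_subset_iff, Finset.singleton_subset_iff, Bool.forall_bool,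
    and_comm]

lemma forall_not_pairCircuit_subset_iff {S : Finset (Fin n × Bool)} :
    (∀ i, ¬ pairCircuit i ⊆ S) ↔ ∃ a, S ⊆ assignFace a := by
  simp only [pairCircuit_subset_iff, not_forall]
  constructor
  · intro h
    choose missing h_missing using h
    refine ⟨fun i ↦ !missing i, fun ⟨i, b⟩ hib ↦ mem_assignFace.2 ?_⟩
    have : b ≠ missing i := by
      rintro rfl
      exact h_missing i hib
    exact (Bool.eq_not.2 this).symm
  · rintro ⟨a, ha⟩ i
    exact ⟨!a i, fun h ↦ Bool.not_ne_self _ (mem_assignFace.1 (ha h)).symm⟩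

lemma isFace_assignFace_iff {φ : Fin m → Finset (Fin n × Bool)} {a : Fin n → Bool} :
    IsFace φ (assignFace a) ↔ Satisfies φ a := by
  simp only [IsFace, clauseDual_subset_assignFace_iff, not_not, Satisfies, and_iff_left_iff_imp]
  exact fun _ ↦ forall_not_pairCircuit_subset_iff.2 ⟨a, subset_rfl⟩

lemma isFace_and_card_eq_iff {φ : Fin m → Finset (Fin n × Bool)} {S : Finset (Fin n × Bool)} :
    IsFace φ S ∧ S.card = n ↔ ∃ a, Satisfies φ a ∧ assignFace a = S := by
  constructor
  · rintro ⟨hface, hcard⟩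
    obtain ⟨a, hSa⟩ := forall_not_pairCircuit_subset_iff.1 hface.2
    obtain rfl : S = assignFace a :=
      Finset.eq_of_subset_of_card_le hSa (by rw [card_assignFace, hcard])
    exact ⟨a, isFace_assignFace_iff.1 hface, rfl⟩
  · rintro ⟨a, ha, rfl⟩
    exact ⟨isFace_assignFace_iff.2 ha, card_assignFace a⟩

lemma natCard_isFace_and_card_eq (φ : Fin m → Finset (Fin n × Bool)) :
    Nat.card {S : Finset (Fin n × Bool) // IsFace φ S ∧ S.card = n} =
      Nat.card {a : Fin n → Bool // Satisfies φ a} := by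
  simp only [isFace_and_card_eq_iff]
  exact Nat.card_image_of_injective assignFace_injective {a | Satisfies φ a}

lemma inDualCNF_iff_not_isFace_compl {φ : Fin m → Finset (Fin n × Bool)}
    {S : Finset (Fin n × Bool)} : InDualCNF φ S ↔ ¬ IsFace φ Sᶜ := by
  simp only [InDualCNF, IsFace, Finset.subset_compl_comm (s := S), not_and_or, not_forall, not_not]

end CNF

theorem card_dual_eq_choose_sub_satisfying {n m : ℕ} (φ : Fin m → Finset (Fin n × Bool)) :
    Nat.card {S : Finset (Fin n × Bool) // InDualCNF φ S ∧ S.card = n} =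
      (2 * n).choose n - Nat.card {a : Fin n → Bool // Satisfies φ a} := by
  have hn : n + n = Fintype.card (Fin n × Bool) := by
    rw [Fintype.card_prod, Fintype.card_fin, Fintype.card_bool, mul_two]
  simp only [inDualCNF_iff_not_isFace_compl]
  rw [← natCard_isFace_and_card_eq φ, two_mul, hn]
  exact Nat.eq_sub_of_add_eq (natCard_not_compl_add_natCard (IsFace φ) hn)
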